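/- Let $A \in \mathbb{Z}^{m \times n}$ and $c \in \mathbb{Z}^n$ with $m \le n$, and let $L$ be any natural number with $L \ge \sum_{i,j} \lceil \log_2(|a_{ij}|+1) \rceil + \sum_i \lceil \log_2(|c_i|+1) \rceil$. Suppose $B \subseteq \{1,\dots,n\}$ with $|B| = m$ is such that the column submatrix $A_B$ is invertible, and let $(y, s)$ be the associated basic dual solution, i.e., $y = (A_B^T)^{-1} c_B$ and $s = c - A^T y$. Then for every index $i$, if $s_i > 0$ then $s_i \ge 2^{-L}$. -/

import Mathlib

open Matrix BigOperators

/-!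
By Cramer's rule, `det A_B` times a slack `s i` is an integer, so a nonzero slack is at least
`1 / |det A_B|` in absolute value. The Leibniz expansion bounds `|det A_B|` by the product of the
row sums of absolute values, hence by `∏ (|a_ij| + 1)`, and each factor is at most
`2 ^ ⌈log₂ (|a_ij| + 1)⌉`.
-/

variable {ι κ R S K : Type*}

theorem sum_add_one_le_prod_add_one [CommSemiring R] [PartialOrder R] [IsOrderedRing R]
    (t : Finset ι) {f : ι → R} (hf : ∀ i ∈ t, 0 ≤ f i) :
    ∑ i ∈ t, f i + 1 ≤ ∏ i ∈ t, (f i + 1) := by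
  induction t using Finset.cons_induction with
  | empty => simp
  | cons a t ha ih =>
    obtain ⟨hfa, hft⟩ := Finset.forall_mem_cons ha _ |>.mp hf
    have hprod : 1 ≤ ∏ i ∈ t, (f i + 1) :=
      (le_add_of_nonneg_left (Finset.sum_nonneg hft)).trans (ih hft)
    calc ∑ i ∈ Finset.cons a t ha, f i + 1
        = f a + (∑ i ∈ t, f i + 1) := by rw [Finset.sum_cons, add_assoc]
      _ ≤ f a * ∏ i ∈ t, (f i + 1) + ∏ i ∈ t, (f i + 1) :=
        add_le_add (le_mul_of_one_le_right hfa hprod) (ih hft)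
      _ = ∏ i ∈ Finset.cons a t ha, (f i + 1) := by rw [Finset.prod_cons, add_one_mul]

theorem sum_comp_le_sum_of_injective [Fintype ι] [Fintype κ] [AddCommMonoid R] [PartialOrder R]
    [IsOrderedAddMonoid R] {φ : ι → κ} (hφ : Function.Injective φ) {g : κ → R}
    (hg : ∀ k, 0 ≤ g k) : ∑ i, g (φ i) ≤ ∑ k, g k :=
  calc ∑ i, g (φ i) = ∑ k ∈ Finset.univ.map ⟨φ, hφ⟩, g k := (Finset.sum_map _ ⟨φ, hφ⟩ g).symm
    _ ≤ ∑ k, g k := Finset.sum_le_sum_of_subset_of_nonneg (Finset.subset_univ _) fun k _ _ => hg k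

theorem abv_det_le_prod_sum [Fintype ι] [DecidableEq ι] [CommRing R] [Nontrivial R]
    [CommRing S] [LinearOrder S] [IsStrictOrderedRing S] (abv : AbsoluteValue R S)
    (M : Matrix ι ι R) : abv M.det ≤ ∏ i, ∑ j, abv (M i j) :=
  calc abv M.det
      = abv (∑ σ : Equiv.Perm ι, σ.sign • ∏ i, M i (σ i)) := by
        rw [← det_transpose, det_apply]; rfl
    _ ≤ ∑ σ : Equiv.Perm ι, abv (σ.sign • ∏ i, M i (σ i)) := abv.sum_le _ _
    _ = ∑ σ : Equiv.Perm ι, ∏ i, abv (M i (σ i)) :=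
        Finset.sum_congr rfl fun σ _ => by rw [abv.map_units_int_smul, abv.map_prod]
    _ ≤ ∑ f : ι → ι, ∏ i, abv (M i (f i)) :=
        sum_comp_le_sum_of_injective (φ := fun σ : Equiv.Perm ι => (σ : ι → ι))
          DFunLike.coe_injective fun f => Finset.prod_nonneg fun i _ => abv.nonneg (M i (f i))
    _ = ∏ i, ∑ j, abv (M i j) := by rw [Finset.prod_univ_sum, Fintype.piFinset_univ]

/-- The binary length `∑ i j, ⌈log₂ (|M i j| + 1)⌉` of an integer matrix. -/
def bitSize [Fintype ι] [Fintype κ] (M : Matrix ι κ ℤ) : ℕ :=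
  ∑ i, ∑ j, Nat.clog 2 ((M i j).natAbs + 1)

theorem bitSize_submatrix_le {ι' κ' : Type*} [Fintype ι] [Fintype κ] [Fintype ι'] [Fintype κ']
    (M : Matrix ι κ ℤ) {e : ι' → ι} {f : κ' → κ} (he : Function.Injective e)
    (hf : Function.Injective f) : bitSize (M.submatrix e f) ≤ bitSize M :=
  calc bitSize (M.submatrix e f)
      ≤ ∑ i, ∑ k, Nat.clog 2 ((M (e i) k).natAbs + 1) :=
        Finset.sum_le_sum fun i _ =>
          sum_comp_le_sum_of_injective (g := fun k => Nat.clog 2 ((M (e i) k).natAbs + 1)) hf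
            fun _ => Nat.zero_le _
    _ ≤ bitSize M :=
        sum_comp_le_sum_of_injective (g := fun i => ∑ k, Nat.clog 2 ((M i k).natAbs + 1)) he
          fun _ => Nat.zero_le _

theorem abs_add_one_le_two_pow_clog (a : ℤ) : |a| + 1 ≤ 2 ^ Nat.clog 2 (a.natAbs + 1) := by
  rw [Int.abs_eq_natAbs]
  exact_mod_cast Nat.le_pow_clog one_lt_two (a.natAbs + 1)

theorem abs_det_le_two_pow_bitSize [Fintype ι] [DecidableEq ι] (M : Matrix ι ι ℤ) :
    |M.det| ≤ 2 ^ bitSize M :=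
  calc |M.det| ≤ ∏ i, ∑ j, |M i j| := abv_det_le_prod_sum AbsoluteValue.abs M
    _ ≤ ∏ i, ∏ j, (|M i j| + 1) := by
        gcongr with i
        exact (le_add_of_nonneg_right zero_le_one).trans
          (sum_add_one_le_prod_add_one _ fun j _ => abs_nonneg (M i j))
    _ ≤ ∏ i, ∏ j, 2 ^ Nat.clog 2 ((M i j).natAbs + 1) := by
        gcongr
        exact abs_add_one_le_two_pow_clog _
    _ = 2 ^ bitSize M := by simp only [Finset.prod_pow_eq_pow_sum, bitSize]

theorem map_det_smul_eq_of_mulVec_eq [Fintype ι] [DecidableEq ι] [CommRing R] [CommRing S]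
    (f : R →+* S) {M : Matrix ι ι R} {b : ι → R} {y : ι → S} (hy : M.map f *ᵥ y = f ∘ b) :
    f M.det • y = f ∘ (M.adjugate *ᵥ b) :=
  calc f M.det • y = (M.map f).adjugate *ᵥ (M.map f *ᵥ y) := by
        rw [mulVec_mulVec, adjugate_mul, smul_mulVec, one_mulVec, f.map_det, f.mapMatrix_apply]
    _ = M.adjugate.map f *ᵥ (f ∘ b) := by
        rw [hy, ← f.mapMatrix_apply, ← f.map_adjugate, f.mapMatrix_apply]
    _ = f ∘ (M.adjugate *ᵥ b) := funext fun i => (f.map_mulVec _ _ i).symm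

theorem map_det_mul_sub_dotProduct [Fintype ι] [DecidableEq ι] [CommRing R] [CommRing S]
    (f : R →+* S) {M : Matrix ι ι R} {b : ι → R} {y : ι → S} (hy : M.map f *ᵥ y = f ∘ b)
    (γ : R) (a : ι → R) :
    f M.det * (f γ - (f ∘ a) ⬝ᵥ y) = f (M.det * γ - a ⬝ᵥ (M.adjugate *ᵥ b)) := by
  rw [mul_sub, ← smul_eq_mul (f M.det) (_ ⬝ᵥ _), ← dotProduct_smul,
    map_det_smul_eq_of_mulVec_eq f hy, ← f.map_dotProduct, map_sub, map_mul]

theorem one_le_abs_mul_abs_of_mul_eq_intCast [Ring K] [LinearOrder K] [IsStrictOrderedRing K]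
    {d w : ℤ} {x : K} (hd : d ≠ 0) (hx : x ≠ 0) (h : d * x = w) : 1 ≤ |(d : K)| * |x| := by
  have hw : w ≠ 0 := by
    rw [← Int.cast_ne_zero (α := K), ← h]
    exact mul_ne_zero (Int.cast_ne_zero.mpr hd) hx
  rw [← abs_mul, h]
  exact_mod_cast Int.one_le_abs hw

theorem basic_dual_solution_lower_bound_general [Fintype ι] [DecidableEq ι]
    [Field K] [LinearOrder K] [IsStrictOrderedRing K]
    (A : Matrix ι κ ℤ) (c : κ → ℤ) (φ : ι → κ)
    (hinv : IsUnit ((A.map (Int.cast : ℤ → K)).submatrix id φ))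
    (y : ι → K) (s : κ → K)
    (hy : ((A.map (Int.cast : ℤ → K)).submatrix id φ)ᵀ *ᵥ y = fun k => (c (φ k) : K))
    (hs : s = (fun i => (c i : K)) - (A.map (Int.cast : ℤ → K))ᵀ *ᵥ y)
    (i : κ) (hi : s i ≠ 0) :
    (2 : K) ^ (-(bitSize (A.submatrix id φ) : ℤ)) ≤ |s i| := by
  set M : Matrix ι ι ℤ := A.submatrix id φ
  have hdet : M.det ≠ 0 := by
    have hunit : IsUnit (M.det : K) := by
      rw [Int.cast_det]
      exact (isUnit_iff_isUnit_det _).mp hinv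
    exact Int.cast_ne_zero.mp hunit.ne_zero
  have hcramer := map_det_mul_sub_dotProduct (Int.castRingHom K) (M := Mᵀ) (b := c ∘ φ) hy (c i)
    fun k => A k i
  rw [det_transpose] at hcramer
  have hslack : 1 ≤ |(M.det : K)| * |s i| :=
    one_le_abs_mul_abs_of_mul_eq_intCast hdet hi (by rw [hs]; exact hcramer)
  have hbound : |(M.det : K)| ≤ 2 ^ bitSize M := mod_cast abs_det_le_two_pow_bitSize M
  rw [_root_.zpow_neg, zpow_natCast, inv_le_iff_one_le_mul₀' (by positivity)]
  exact hslack.trans (by gcongr)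

/-- **Khachiyan's bound, dual half.** If `A ∈ ℤ^{m×n}`, `c ∈ ℤ^n`, `m ≤ n`, and
`L ≥ ∑_{i,j} ⌈log₂(|a_ij|+1)⌉ + ∑_i ⌈log₂(|c_i|+1)⌉`, then for a basic dual solution
`y = (A_Bᵀ)⁻¹ c_B`, `s = c - Aᵀ y` (basis `B = range φ` with `A_B` invertible),
every positive entry of `s` satisfies `s_i ≥ 2^{-L}`. -/
theorem basic_dual_solution_lower_bound
    (m n : ℕ) (hmn : m ≤ n)
    (A : Matrix (Fin m) (Fin n) ℤ) (c : Fin n → ℤ) (L : ℕ)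
    (hL : (∑ i, ∑ j, Nat.clog 2 ((A i j).natAbs + 1))
            + (∑ i, Nat.clog 2 ((c i).natAbs + 1)) ≤ L)
    (φ : Fin m → Fin n) (hφ : Function.Injective φ)
    (hinv : IsUnit ((A.map (Int.cast : ℤ → ℝ)).submatrix id φ))
    (y : Fin m → ℝ) (s : Fin n → ℝ)
    (hy : ((A.map (Int.cast : ℤ → ℝ)).submatrix id φ)ᵀ.mulVec y
            = fun k => (c (φ k) : ℝ))
    (hs : s = (fun i => (c i : ℝ)) - (A.map (Int.cast : ℤ → ℝ))ᵀ.mulVec y) :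
    ∀ i, 0 < s i → (2 : ℝ) ^ (-(L : ℤ)) ≤ s i := by
  intro i hi
  have hbits : bitSize (A.submatrix id φ) ≤ L :=
    (bitSize_submatrix_le A Function.injective_id hφ).trans (le_of_add_le_left hL)
  calc (2 : ℝ) ^ (-(L : ℤ)) ≤ 2 ^ (-(bitSize (A.submatrix id φ) : ℤ)) := by
        gcongr
        exact one_le_two
    _ ≤ |s i| := basic_dual_solution_lower_bound_general A c φ hinv y s hy hs i hi.ne'
    _ = s i := abs_of_pos hi
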